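/- (Sharpened Gandhi formula) For every positive integer n, p_{n+1} = ⌊log₂(3/(2·θ(n)))⌋, where ⌊·⌋ denotes the floor function. -/

import Mathlib

open scoped BigOperators

/-- `nthPrime k` is the k-th prime with 1-based indexing: p₁ = 2, p₂ = 3, ... -/
noncomputable def nthPrime (k : ℕ) : ℕ := Nat.nth Nat.Prime (k - 1)

/-- `primorialN n` is `p_n# = p₁ ⬝ p₂ ⋯ p_n`, the product of the first `n` primes. -/
noncomputable def primorialN (n : ℕ) : ℕ := ∏ i ∈ Finset.range n, Nat.nth Nat.Prime i

/-- `theta n = -1/2 + ∑_{d ∣ p_n#} μ(d)/(2^d - 1)`. -/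
noncomputable def theta (n : ℕ) : ℝ :=
  -1/2 + ∑ d ∈ (primorialN n).divisors,
    ((ArithmeticFunction.moebius d : ℤ) : ℝ) / (2 ^ d - 1)

/-!
Expanding `1 / (2 ^ d - 1)` as the geometric series `∑ 2⁻ᵐ` over the positive multiples `m` of `d`
and exchanging the sums, Möbius inversion leaves `θ(n) + 1/2 = ∑ 2⁻ᵐ` over the positive `m` coprime
to `p_n#` (`hasSum_coprime`). The term `m = 1` contributes `1/2`. Every other `m` coprime to `p_n#`
is odd and at least the odd prime `q = p_{n+1}`, and `q` itself is coprime to `p_n#`. Hence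
`2⁻ᑫ ≤ θ(n) ≤ 2⁻ᑫ (1 + 1/4 + 1/16 + ⋯) = (4/3) 2⁻ᑫ`, and `3/4 < 1 ≤ 4/3 < 3/2` puts
`log₂ (3 / (2 θ(n)))` in `[q, q + 1)`.
-/

/-- The geometric series over the positive multiples of `d`, extended by zero to `ℕ`. -/
lemma hasSum_multiples (d : ℕ) (hd : 0 < d) :
    HasSum (fun m : ℕ => if 0 < m ∧ d ∣ m then (1 / 2 : ℝ) ^ m else 0) (1 / (2 ^ d - 1)) := by
  have hinj : Function.Injective (fun k : ℕ => d * (k + 1)) := by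
    intro a b h
    have := Nat.eq_of_mul_eq_mul_left hd h
    omega
  rw [← hinj.hasSum_iff]
  · have h2 : (1 : ℝ) < 2 ^ d := one_lt_pow₀ (by norm_num) (by omega)
    have hx : ((1 / 2 : ℝ) ^ d) < 1 := pow_lt_one₀ (by norm_num) (by norm_num) (by omega)
    have h := (hasSum_geometric_of_lt_one (by positivity) hx).mul_left ((1 / 2 : ℝ) ^ d)
    convert h using 1
    -- the two paths to the additive monoid structure on ℝ agree
    · rfl
    · funext k
      simp only [Function.comp]
      rw [if_pos ⟨by positivity, dvd_mul_right _ _⟩, pow_mul, pow_succ']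
    · have h3 : (2 : ℝ) ^ d - 1 ≠ 0 := by linarith
      rw [one_div_pow]
      field_simp
  · intro m hm
    rw [if_neg]
    rintro ⟨h0, k, rfl⟩
    refine hm ⟨k - 1, ?_⟩
    have : 0 < k := Nat.pos_of_mul_pos_left h0
    simp only
    congr 1
    omega

lemma primorialN_ne_zero (n : ℕ) : primorialN n ≠ 0 :=
  Finset.prod_ne_zero_iff.2 fun i _ => (Nat.prime_nth_prime i).ne_zero

/-- Möbius inversion: `∑ μ(d)` over the common divisors of `P` and `m` detects coprimality. -/
lemma sum_moebius_common (P m : ℕ) (hP : P ≠ 0) :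
    (∑ d ∈ P.divisors, if d ∣ m then ((ArithmeticFunction.moebius d : ℤ) : ℝ) else 0)
      = if Nat.Coprime P m then 1 else 0 := by
  have hdiv : P.divisors.filter (· ∣ m) = (Nat.gcd P m).divisors := by
    ext d
    simp [Nat.dvd_gcd_iff, hP]
  rw [← Finset.sum_filter, hdiv]
  have h := congrArg (fun f => f (Nat.gcd P m)) ArithmeticFunction.moebius_mul_coe_zeta
  simp only [ArithmeticFunction.coe_mul_zeta_apply,
    ArithmeticFunction.one_apply] at h
  rw [← Int.cast_sum, h]
  simp [Nat.Coprime]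

/-- `θ(n) + 1/2` is the sum of `2⁻ᵐ` over the positive integers `m` coprime to `p_n#`. -/
lemma hasSum_coprime (n : ℕ) :
    HasSum (fun m : ℕ => if 0 < m ∧ Nat.Coprime (primorialN n) m then (1 / 2 : ℝ) ^ m else 0)
      (theta n + 1 / 2) := by
  have h := hasSum_sum (s := (primorialN n).divisors) (fun d hd =>
    (hasSum_multiples d (Nat.pos_of_mem_divisors hd)).mul_left
      ((ArithmeticFunction.moebius d : ℤ) : ℝ))
  convert h using 1
  -- the two paths to the additive monoid structure on ℝ agree
  · rfl
  · funext m
    by_cases hm : 0 < m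
    · have h2 := congrArg (· * (1 / 2 : ℝ) ^ m)
        (sum_moebius_common (primorialN n) m (primorialN_ne_zero n))
      simp only [Finset.sum_mul, ite_mul, zero_mul, one_mul] at h2
      simp only [hm, true_and, mul_ite, mul_zero]
      exact h2.symm
    · simp [hm]
  · simp only [theta, mul_one_div]
    ring

lemma coprime_primorialN_nth (n : ℕ) : Nat.Coprime (primorialN n) (Nat.nth Nat.Prime n) := by
  refine Nat.Coprime.prod_left fun i hi => ?_
  rw [Nat.coprime_primes (Nat.prime_nth_prime i) (Nat.prime_nth_prime n)]
  exact (Nat.nth_strictMono Nat.infinite_setOfPred_prime (Finset.mem_range.1 hi)).ne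

lemma prime_dvd_primorialN {n p : ℕ} (hp : p.Prime) (h : p < Nat.nth Nat.Prime n) :
    p ∣ primorialN n := by
  rw [← Nat.nth_count hp] at h ⊢
  exact Finset.dvd_prod_of_mem _ (Finset.mem_range.2
    ((Nat.nth_lt_nth Nat.infinite_setOfPred_prime).1 h))

lemma nth_le_of_coprime {n m : ℕ} (hm : 1 < m) (h : Nat.Coprime (primorialN n) m) :
    Nat.nth Nat.Prime n ≤ m := by
  by_contra! hlt
  have hp := Nat.minFac_prime hm.ne'
  exact Nat.not_coprime_of_dvd_of_dvd hp.one_lt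
    (prime_dvd_primorialN hp ((Nat.minFac_le (by omega)).trans_lt hlt)) (Nat.minFac_dvd m) h

lemma two_lt_nth {n : ℕ} (hn : 0 < n) : 2 < Nat.nth Nat.Prime n := by
  have h : Nat.nth Nat.Prime 0 < Nat.nth Nat.Prime n :=
    Nat.nth_strictMono Nat.infinite_setOfPred_prime hn
  have := (Nat.prime_nth_prime 0).two_le
  omega

/-- For `n > 0` the primorial is even, so anything coprime to it is odd, as is `p_{n+1}`. -/
lemma exists_eq_nth_add {n m : ℕ} (hn : 0 < n) (hm : 1 < m)
    (h : Nat.Coprime (primorialN n) m) : ∃ j, Nat.nth Nat.Prime n + 2 * j = m := by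
  have h2 : 2 ∣ primorialN n := prime_dvd_primorialN Nat.prime_two (two_lt_nth hn)
  have hodd {k : ℕ} (hk : Nat.Coprime (primorialN n) k) : ¬ 2 ∣ k := fun hd =>
    Nat.not_coprime_of_dvd_of_dvd one_lt_two h2 hd hk
  have h3 := hodd h
  have h4 := hodd (coprime_primorialN_nth n)
  have h5 := nth_le_of_coprime hm h
  exact ⟨(m - Nat.nth Nat.Prime n) / 2, by omega⟩

lemma le_theta {n : ℕ} (hn : 0 < n) : (1 / 2 : ℝ) ^ Nat.nth Nat.Prime n ≤ theta n := by
  have hq := two_lt_nth hn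
  have h := sum_le_hasSum {1, Nat.nth Nat.Prime n}
    (fun m _ => by positivity) (hasSum_coprime n)
  rw [Finset.sum_pair (by omega), if_pos ⟨one_pos, Nat.coprime_one_right _⟩,
    if_pos ⟨by omega, coprime_primorialN_nth n⟩] at h
  linarith

/-- Comparison with the sum over `m = 1` and all `m = p_{n+1} + 2j`. -/
lemma theta_le {n : ℕ} (hn : 0 < n) :
    theta n ≤ 4 / 3 * (1 / 2 : ℝ) ^ Nat.nth Nat.Prime n := by
  classical
  set q := Nat.nth Nat.Prime n with hqdef
  have hk : HasSum (fun m : ℕ => if ∃ j, q + 2 * j = m then (1 / 2 : ℝ) ^ m else 0)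
      (4 / 3 * (1 / 2 : ℝ) ^ q) := by
    have hinj : Function.Injective (fun j : ℕ => q + 2 * j) := by
      intro a b h
      simp only at h
      omega
    rw [← hinj.hasSum_iff]
    · have h := (hasSum_geometric_of_lt_one (r := (1 / 4 : ℝ))
        (by norm_num) (by norm_num)).mul_left ((1 / 2 : ℝ) ^ q)
      convert h using 1
      -- the two paths to the additive monoid structure on ℝ agree
      · rfl
      · funext j
        simp only [Function.comp]
        rw [if_pos ⟨j, rfl⟩, pow_add, pow_mul]
        norm_num
      · norm_num
        ring
    · intro m hm
      exact if_neg hm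
  have h1 := (hasSum_ite_eq (1 : ℕ) (1 / 2 : ℝ)).add hk
  have h := hasSum_le (fun m => ?_) (hasSum_coprime n) h1
  · linarith
  · by_cases hm : 0 < m ∧ Nat.Coprime (primorialN n) m
    · rw [if_pos hm]
      by_cases hm1 : m = 1
      · subst hm1
        rw [if_pos rfl, pow_one]
        exact le_add_of_nonneg_right (by positivity)
      · rw [if_neg hm1, if_pos (exists_eq_nth_add hn (by omega) hm.2), zero_add]
    · rw [if_neg hm]
      positivity

/-- Sharpened Gandhi formula: for every positive integer `n`,
`p_{n+1} = ⌊log₂(3/(2⬝θ(n)))⌋`. -/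
theorem gandhi_formula_sharp (n : ℕ) (hn : 0 < n) :
    (nthPrime (n + 1) : ℤ) = ⌊Real.logb 2 (3 / (2 * theta n))⌋ := by
  have hlo := le_theta hn
  have hhi := theta_le hn
  simp only [nthPrime, Nat.add_sub_cancel]
  set q := Nat.nth Nat.Prime n
  have hpos : (0 : ℝ) < (1 / 2 : ℝ) ^ q := by positivity
  have hθ : 0 < theta n := hpos.trans_le hlo
  have hmul : (2 : ℝ) ^ q * (1 / 2 : ℝ) ^ q = 1 := by rw [← mul_pow]; norm_num
  have h2 : (0 : ℝ) < 2 ^ q := by positivity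
  have hx : 0 < 3 / (2 * theta n) := by positivity
  have hl := mul_le_mul_of_nonneg_left hlo h2.le
  have hh := mul_le_mul_of_nonneg_left hhi h2.le
  symm
  rw [Int.floor_eq_iff]
  constructor
  · rw [Real.le_logb_iff_rpow_le one_lt_two hx, Int.cast_natCast, Real.rpow_natCast,
      le_div_iff₀ (by positivity)]
    linarith
  · rw [Real.logb_lt_iff_lt_rpow one_lt_two hx, Int.cast_natCast, Real.rpow_add two_pos,
      Real.rpow_natCast, Real.rpow_one, div_lt_iff₀ (by positivity)]
    linarith
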